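/- Suppose the stabilizer G of (K,S) in SO(3) is nontrivial. Then there exists an orthonormal basis {e₁,e₂,e₃} of V such that G is one of the following subgroups of SO(3): SO(3) itself; the group of all rotations about the axis e₁ together with all rotations by angle π about axes orthogonal to e₁; the group of all rotations about the axis e₁; the order-12 group generated by P₁, P₂ and Q (isomorphic to the alternating group A₄); the order-6 group generated by P₁ and R₃ (isomorphic to the symmetric group S₃); the order-4 group {id, P₁, P₂, P₃} (isomorphic to Z₂ × Z₂); the order-3 group {id, R₁, R₁²}; or the order-2 group {id, P₁}. -/

import Mathlib

/-!
Every element of the stabilizer `G` is a rotation, so it has an axis.  There are two cases.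

Suppose some `g ∈ G` has `g² ≠ 1`.  Let `e₁` span its axis and decompose `K` and `S` into weights
under rotations about `e₁`.  The weights occurring are at most three, and invariance under `g`,
whose angle is not a multiple of `π`, kills the parts of weight one and two.  Hence, after turning
`e₂, e₃`, one has `S = diag (a, b, b)` and the cubic form of `K` is
`lam (2 x³ - 3 x (y² + z²)) + mu (y³ - 3 y z²)` (`exists_z3_coord`).  The invariant quadratic form
`X ↦ tr (K_X ∘ K_X)` shows that `G` preserves the line of `e₁` unless `mu² = 2 lam²`
(`axis_of_K`), and so does `S` if `a ≠ b` (`axis_of_S`).  When the line is preserved, `G` is read off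
from the two-dimensional problem in the orthogonal plane: `lam ≠ 0` forbids reversing the axis, and
`mu ≠ 0` restricts the angles to multiples of `2π/3`.  In the remaining case `mu² = 2 lam²`, `a = b`,
either `K = 0` and `G = SO(3)`, or the cubic form is a multiple of `x y z` in another orthonormal
basis (`exists_ot_coord`) and `G` is the tetrahedral rotation group (`stab_eq_a4`).

If instead all elements of `G` square to the identity, then `G` is commutative.  It contains a
half-turn `P₁`; any further element commutes with `P₁`, hence is a half-turn about an orthogonal
axis, and a rotation commuting with two orthogonal half-turns is diagonal.  So `G` has order two or
four (`classify_of_involutions`).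
-/

/-!
Setting (affine hypersurfaces admitting a pointwise symmetry, algebraic part):
`V₃ = ℝ³` with its standard inner product `h = ⟪·,·⟫`.  `K` is a symmetric bilinear
map `V₃ × V₃ → V₃` whose cubic form `h(K(X,Y),Z)` is totally symmetric and which
satisfies the apolarity condition (`K_X` trace-free), `S` is an `h`-symmetric
endomorphism.  `stab K S` is the stabilizer of the pair `(K,S)` inside `SO(3)`.
-/

noncomputable section

open scoped RealInnerProductSpace

/-- The 3-dimensional Euclidean space `ℝ³` with its standard inner product. -/
abbrev V₃ := EuclideanSpace ℝ (Fin 3)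

/-- A symmetric bilinear map `K` is admissible (a difference tensor) if the cubic form
`(X,Y,Z) ↦ ⟪K X Y, Z⟫` is totally symmetric and `K_X := K X ·` is trace-free for all `X`. -/
def IsAdmissibleK (K : V₃ →ₗ[ℝ] V₃ →ₗ[ℝ] V₃) : Prop :=
  (∀ X Y, K X Y = K Y X) ∧
  (∀ X Y Z, ⟪K X Y, Z⟫ = ⟪K X Z, Y⟫) ∧
  (∀ X, LinearMap.trace ℝ V₃ (K X) = 0)

/-- `S` is a symmetric endomorphism with respect to the inner product. -/
def IsSymmEndo (S : V₃ →ₗ[ℝ] V₃) : Prop := ∀ X Y, ⟪S X, Y⟫ = ⟪X, S Y⟫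

/-- The stabilizer of the pair `(K,S)` inside `SO(3)`: all orientation-preserving
(i.e. determinant `1`) linear isometries `g` of `ℝ³` with `K(gX,gY) = g(K(X,Y))`
and `S(gX) = g(SX)` for all `X, Y`. -/
def stab (K : V₃ →ₗ[ℝ] V₃ →ₗ[ℝ] V₃) (S : V₃ →ₗ[ℝ] V₃) : Set (V₃ ≃ₗᵢ[ℝ] V₃) :=
  {g | LinearMap.det (g.toLinearEquiv : V₃ →ₗ[ℝ] V₃) = 1 ∧
    (∀ X Y, K (g X) (g Y) = g (K X Y)) ∧ (∀ X, S (g X) = g (S X))}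

/-- The matrix of `g` with respect to the orthonormal basis `e`: column `j` consists of
the coordinates of `g (e j)` in the basis `e`. -/
def matrixOf (e : OrthonormalBasis (Fin 3) ℝ V₃) (g : V₃ ≃ₗᵢ[ℝ] V₃) :
    Matrix (Fin 3) (Fin 3) ℝ :=
  Matrix.of fun i j => ⟪e i, g (e j)⟫

/-- The standard orthonormal basis `{e₁, e₂, e₃}` of `ℝ³`. -/
def stdB : OrthonormalBasis (Fin 3) ℝ V₃ := EuclideanSpace.basisFun (Fin 3) ℝ

/-- Matrix of the rotation by angle `θ` about the first basis vector `e₁`. -/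
def rotMat (θ : ℝ) : Matrix (Fin 3) (Fin 3) ℝ :=
  !![1, 0, 0; 0, Real.cos θ, -Real.sin θ; 0, Real.sin θ, Real.cos θ]

/-- Matrix of the rotation by angle `π` about the axis `cos (θ/2) e₂ + sin (θ/2) e₃`
in the plane orthogonal to `e₁`. -/
def flipMat (θ : ℝ) : Matrix (Fin 3) (Fin 3) ℝ :=
  !![-1, 0, 0; 0, Real.cos θ, Real.sin θ; 0, Real.sin θ, -Real.cos θ]

/-- The set of all rotations about the axis `e 0` (the first vector of the basis `e`). -/
def rotSet (e : OrthonormalBasis (Fin 3) ℝ V₃) : Set (V₃ ≃ₗᵢ[ℝ] V₃) :=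
  {g | ∃ θ : ℝ, matrixOf e g = rotMat θ}

/-- The set of all rotations by angle `π` about axes orthogonal to `e 0`. -/
def flipSet (e : OrthonormalBasis (Fin 3) ℝ V₃) : Set (V₃ ≃ₗᵢ[ℝ] V₃) :=
  {g | ∃ θ : ℝ, matrixOf e g = flipMat θ}

/-- The whole of `SO(3)`, as a set of linear isometries of `ℝ³`. -/
def so3Set : Set (V₃ ≃ₗᵢ[ℝ] V₃) :=
  {g | LinearMap.det (g.toLinearEquiv : V₃ →ₗ[ℝ] V₃) = 1}

/-- Matrix of `P₁`, the rotation by angle `π` about `e₁`. -/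
def P1mat : Matrix (Fin 3) (Fin 3) ℝ := !![1, 0, 0; 0, -1, 0; 0, 0, -1]

/-- Matrix of `P₂`, the rotation by angle `π` about `e₂`. -/
def P2mat : Matrix (Fin 3) (Fin 3) ℝ := !![-1, 0, 0; 0, 1, 0; 0, 0, -1]

/-- Matrix of `P₃`, the rotation by angle `π` about `e₃`. -/
def P3mat : Matrix (Fin 3) (Fin 3) ℝ := !![-1, 0, 0; 0, -1, 0; 0, 0, 1]

/-- Matrix of `R₁`, the rotation by angle `2π/3` about `e₁`. -/
def R1mat : Matrix (Fin 3) (Fin 3) ℝ :=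
  !![1, 0, 0; 0, -(1/2), -(Real.sqrt 3/2); 0, Real.sqrt 3/2, -(1/2)]

/-- Matrix of `R₃`, the rotation by angle `2π/3` about `e₃`. -/
def R3mat : Matrix (Fin 3) (Fin 3) ℝ :=
  !![-(1/2), -(Real.sqrt 3/2), 0; Real.sqrt 3/2, -(1/2), 0; 0, 0, 1]

/-- Matrix of `Q`, the rotation by angle `2π/3` about the axis `e₁ + e₂ + e₃`
(the cyclic permutation `e₁ ↦ e₂ ↦ e₃ ↦ e₁`). -/
def Qmat : Matrix (Fin 3) (Fin 3) ℝ := !![0, 0, 1; 1, 0, 0; 0, 1, 0]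

/-- The matrices of the Klein four-group `{id, P₁, P₂, P₃} ≅ Z₂ × Z₂`. -/
def kleinMatSet : Set (Matrix (Fin 3) (Fin 3) ℝ) := {1, P1mat, P2mat, P3mat}

/-- The matrices of the order-6 group `⟨P₁, R₃⟩ ≅ S₃`. -/
def s3MatSet : Set (Matrix (Fin 3) (Fin 3) ℝ) :=
  {1, R3mat, R3mat * R3mat, P1mat, P1mat * R3mat, R3mat * P1mat}

/-- The matrices of the order-12 group `⟨P₁, P₂, Q⟩ ≅ A₄`. -/
def a4MatSet : Set (Matrix (Fin 3) (Fin 3) ℝ) :=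
  {1, P1mat, P2mat, P3mat, Qmat, Qmat * Qmat,
   P1mat * Qmat, P2mat * Qmat, P3mat * Qmat,
   Qmat * Qmat * P1mat, Qmat * Qmat * P2mat, Qmat * Qmat * P3mat}

/-- The matrices of the order-3 group `{id, R₁, R₁²} ≅ Z₃`. -/
def z3MatSet : Set (Matrix (Fin 3) (Fin 3) ℝ) := {1, R1mat, R1mat * R1mat}

/-- The matrices of the order-2 group `{id, P₁} ≅ Z₂`. -/
def z2MatSet : Set (Matrix (Fin 3) (Fin 3) ℝ) := {1, P1mat}

/-- The pair `(K,S)` is in `Z₂`-canonical form with parameters `(lam, mu, a, b, c, d)`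
with respect to the orthonormal basis `e`. -/
def Z2Form (K : V₃ →ₗ[ℝ] V₃ →ₗ[ℝ] V₃) (S : V₃ →ₗ[ℝ] V₃)
    (e : OrthonormalBasis (Fin 3) ℝ V₃) (lam mu a b c d : ℝ) : Prop :=
  K (e 0) (e 0) = (2*lam) • e 0 ∧
  K (e 0) (e 1) = (-lam) • e 1 + mu • e 2 ∧
  K (e 0) (e 2) = mu • e 1 + (-lam) • e 2 ∧
  K (e 1) (e 1) = (-lam) • e 0 ∧
  K (e 1) (e 2) = mu • e 0 ∧
  K (e 2) (e 2) = (-lam) • e 0 ∧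
  S (e 0) = a • e 0 ∧ S (e 1) = b • e 1 + d • e 2 ∧ S (e 2) = d • e 1 + c • e 2

/-- The pair `(K,S)` is in `Z₃`-canonical form with parameters `(lam, mu, a, b)`
with respect to the orthonormal basis `e`. -/
def Z3Form (K : V₃ →ₗ[ℝ] V₃ →ₗ[ℝ] V₃) (S : V₃ →ₗ[ℝ] V₃)
    (e : OrthonormalBasis (Fin 3) ℝ V₃) (lam mu a b : ℝ) : Prop :=
  K (e 0) (e 0) = (2*lam) • e 0 ∧
  K (e 0) (e 1) = (-lam) • e 1 ∧
  K (e 0) (e 2) = (-lam) • e 2 ∧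
  K (e 1) (e 1) = (-lam) • e 0 + mu • e 1 ∧
  K (e 1) (e 2) = (-mu) • e 2 ∧
  K (e 2) (e 2) = (-lam) • e 0 + (-mu) • e 1 ∧
  S (e 0) = a • e 0 ∧ S (e 1) = b • e 1 ∧ S (e 2) = b • e 2

/-- The pair `(K,S)` is in `SO(2)`-canonical form with parameters `(lam, a, b)`
with respect to the orthonormal basis `e`. -/
def SO2Form (K : V₃ →ₗ[ℝ] V₃ →ₗ[ℝ] V₃) (S : V₃ →ₗ[ℝ] V₃)
    (e : OrthonormalBasis (Fin 3) ℝ V₃) (lam a b : ℝ) : Prop :=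
  K (e 0) (e 0) = (2*lam) • e 0 ∧
  K (e 0) (e 1) = (-lam) • e 1 ∧
  K (e 0) (e 2) = (-lam) • e 2 ∧
  K (e 1) (e 1) = (-lam) • e 0 ∧
  K (e 1) (e 2) = 0 ∧
  K (e 2) (e 2) = (-lam) • e 0 ∧
  S (e 0) = a • e 0 ∧ S (e 1) = b • e 1 ∧ S (e 2) = b • e 2

/-- The pair `(K,S)` is in orthogonal-triple canonical form with parameters `(lam, a, b, c)`
with respect to the orthonormal basis `e`. -/
def OTForm (K : V₃ →ₗ[ℝ] V₃ →ₗ[ℝ] V₃) (S : V₃ →ₗ[ℝ] V₃)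
    (e : OrthonormalBasis (Fin 3) ℝ V₃) (lam a b c : ℝ) : Prop :=
  K (e 0) (e 0) = 0 ∧ K (e 1) (e 1) = 0 ∧ K (e 2) (e 2) = 0 ∧
  K (e 0) (e 1) = lam • e 2 ∧
  K (e 0) (e 2) = lam • e 1 ∧
  K (e 1) (e 2) = lam • e 0 ∧
  S (e 0) = a • e 0 ∧ S (e 1) = b • e 1 ∧ S (e 2) = c • e 2

/-- The pair `(K,S)` is in `S₃`-canonical form with parameters `(lam, a, b)`
with respect to the orthonormal basis `e`. -/
def S3Form (K : V₃ →ₗ[ℝ] V₃ →ₗ[ℝ] V₃) (S : V₃ →ₗ[ℝ] V₃)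
    (e : OrthonormalBasis (Fin 3) ℝ V₃) (lam a b : ℝ) : Prop :=
  K (e 0) (e 0) = lam • e 0 ∧
  K (e 0) (e 1) = (-lam) • e 1 ∧
  K (e 1) (e 1) = (-lam) • e 0 ∧
  K (e 0) (e 2) = 0 ∧ K (e 1) (e 2) = 0 ∧ K (e 2) (e 2) = 0 ∧
  S (e 0) = a • e 0 ∧ S (e 1) = a • e 1 ∧ S (e 2) = b • e 2

/-! ### Coordinates -/

lemma matrixOf_eq_toMatrix (e : OrthonormalBasis (Fin 3) ℝ V₃) (g : V₃ ≃ₗᵢ[ℝ] V₃) :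
    matrixOf e g = LinearMap.toMatrix e.toBasis e.toBasis (g.toLinearEquiv : V₃ →ₗ[ℝ] V₃) := by
  ext i j
  simp [matrixOf, LinearMap.toMatrix_apply, OrthonormalBasis.repr_apply_apply]

lemma matrixOf_mul (e : OrthonormalBasis (Fin 3) ℝ V₃) (g h : V₃ ≃ₗᵢ[ℝ] V₃) :
    matrixOf e (g * h) = matrixOf e g * matrixOf e h := by
  simp only [matrixOf_eq_toMatrix]
  rw [← LinearMap.toMatrix_mul]
  rfl

lemma matrixOf_one (e : OrthonormalBasis (Fin 3) ℝ V₃) : matrixOf e 1 = 1 := by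
  rw [matrixOf_eq_toMatrix, ← LinearMap.toMatrix_one e.toBasis]
  rfl

lemma matrixOf_injective (e : OrthonormalBasis (Fin 3) ℝ V₃) :
    Function.Injective (matrixOf e) := by
  intro g h hgh
  simp only [matrixOf_eq_toMatrix] at hgh
  have := (LinearMap.toMatrix e.toBasis e.toBasis).injective hgh
  ext1 x
  exact LinearMap.congr_fun this x

lemma det_matrixOf (e : OrthonormalBasis (Fin 3) ℝ V₃) (g : V₃ ≃ₗᵢ[ℝ] V₃) :
    (matrixOf e g).det = LinearMap.det (g.toLinearEquiv : V₃ →ₗ[ℝ] V₃) := by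
  rw [matrixOf_eq_toMatrix, LinearMap.det_toMatrix]

lemma apply_basis (e : OrthonormalBasis (Fin 3) ℝ V₃) (g : V₃ ≃ₗᵢ[ℝ] V₃) (j : Fin 3) :
    g (e j) = ∑ i, matrixOf e g i j • e i := by
  simp only [matrixOf, Matrix.of_apply]
  exact (e.sum_repr' (g (e j))).symm

lemma matrixOf_orth (e : OrthonormalBasis (Fin 3) ℝ V₃) (g : V₃ ≃ₗᵢ[ℝ] V₃) :
    (matrixOf e g).transpose * matrixOf e g = 1 := by
  ext i j
  have h : ⟪g (e i), g (e j)⟫ = ⟪e i, e j⟫ := g.inner_map_map _ _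
  rw [← OrthonormalBasis.sum_inner_mul_inner e] at h
  simp only [Matrix.mul_apply, Matrix.transpose_apply, matrixOf, Matrix.of_apply]
  simp only [real_inner_comm (g (e i))] at h ⊢
  rw [Matrix.one_apply, ← orthonormal_iff_ite.mp e.orthonormal i j, ← h]

/-- The coefficient array `k` of a bilinear map transforms under the matrix `Q`
(new basis vectors as columns) into the array `k'`. -/
def Intertwines (Q : Matrix (Fin 3) (Fin 3) ℝ) (k k' : Fin 3 → Fin 3 → Fin 3 → ℝ) : Prop :=
  ∀ i j r, ∑ p, ∑ q, Q p i * Q q j * k p q r = ∑ l, k' i j l * Q r l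

/-- In the basis `e`, the bilinear map `K` has structure constants `k` and `S` has matrix `s`. -/
def HasCoord (K : V₃ →ₗ[ℝ] V₃ →ₗ[ℝ] V₃) (S : V₃ →ₗ[ℝ] V₃) (e : OrthonormalBasis (Fin 3) ℝ V₃)
    (k : Fin 3 → Fin 3 → Fin 3 → ℝ) (s : Matrix (Fin 3) (Fin 3) ℝ) : Prop :=
  (∀ i j, K (e i) (e j) = ∑ l, k i j l • e l) ∧ ∀ j, S (e j) = ∑ i, s i j • e i

lemma basis_sum_inj (e : OrthonormalBasis (Fin 3) ℝ V₃) (a b : Fin 3 → ℝ) :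
    ∑ i, a i • e i = ∑ i, b i • e i ↔ ∀ i, a i = b i := by
  constructor
  · intro h i
    have := congrArg (fun v => ⟪e i, v⟫) h
    simpa [inner_sum, inner_smul_right, orthonormal_iff_ite.mp e.orthonormal] using this
  · intro h
    simp [h]

lemma K_expand {K : V₃ →ₗ[ℝ] V₃ →ₗ[ℝ] V₃} {S : V₃ →ₗ[ℝ] V₃} {e : OrthonormalBasis (Fin 3) ℝ V₃}
    {k : Fin 3 → Fin 3 → Fin 3 → ℝ} {s : Matrix (Fin 3) (Fin 3) ℝ}
    (h : HasCoord K S e k s) (a b : Fin 3 → ℝ) :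
    K (∑ i, a i • e i) (∑ i, b i • e i) = ∑ r, (∑ p, ∑ q, a p * b q * k p q r) • e r := by
  simp only [Fin.sum_univ_three, map_add, map_smul, LinearMap.add_apply, LinearMap.smul_apply, h.1]
  module

lemma S_expand {K : V₃ →ₗ[ℝ] V₃ →ₗ[ℝ] V₃} {S : V₃ →ₗ[ℝ] V₃} {e : OrthonormalBasis (Fin 3) ℝ V₃}
    {k : Fin 3 → Fin 3 → Fin 3 → ℝ} {s : Matrix (Fin 3) (Fin 3) ℝ}
    (h : HasCoord K S e k s) (a : Fin 3 → ℝ) :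
    S (∑ i, a i • e i) = ∑ r, (∑ p, s r p * a p) • e r := by
  simp only [Fin.sum_univ_three, map_add, map_smul, h.2]
  module

/-- Membership in the stabilizer, expressed in coordinates. -/
lemma mem_stab_iff {K : V₃ →ₗ[ℝ] V₃ →ₗ[ℝ] V₃} {S : V₃ →ₗ[ℝ] V₃}
    {e : OrthonormalBasis (Fin 3) ℝ V₃}
    {k : Fin 3 → Fin 3 → Fin 3 → ℝ} {s : Matrix (Fin 3) (Fin 3) ℝ}
    (h : HasCoord K S e k s) (g : V₃ ≃ₗᵢ[ℝ] V₃) :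
    g ∈ stab K S ↔ (matrixOf e g).det = 1 ∧ Intertwines (matrixOf e g) k k ∧
      s * matrixOf e g = matrixOf e g * s := by
  have h1 : (∀ X Y, K (g X) (g Y) = g (K X Y)) ↔
      ∀ i j, K (g (e i)) (g (e j)) = g (K (e i) (e j)) := by
    refine ⟨fun H i j => H _ _, fun H X Y => ?_⟩
    rw [← e.sum_repr' X, ← e.sum_repr' Y]
    simp only [Fin.sum_univ_three, map_add, map_smul, LinearMap.add_apply, LinearMap.smul_apply, H]
  have h2 : (∀ X, S (g X) = g (S X)) ↔ ∀ i, S (g (e i)) = g (S (e i)) := by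
    refine ⟨fun H i => H _, fun H X => ?_⟩
    rw [← e.sum_repr' X]
    simp only [Fin.sum_univ_three, map_add, map_smul, H]
  have h3 : ∀ a : Fin 3 → ℝ, g (∑ i, a i • e i) = ∑ r, (∑ l, a l * matrixOf e g r l) • e r := by
    intro a
    simp only [map_sum, map_smul, apply_basis e g]
    simp only [Fin.sum_univ_three]
    module
  have h4 : ∀ i j, K (g (e i)) (g (e j)) = ∑ r, (∑ p, ∑ q, matrixOf e g p i * matrixOf e g q j *
      k p q r) • e r := by
    intro i j
    rw [apply_basis e g i, apply_basis e g j, K_expand h]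
  have h5 : ∀ i, S (g (e i)) = ∑ r, (∑ p, s r p * matrixOf e g p i) • e r := by
    intro i
    rw [apply_basis e g i, S_expand h]
  simp only [stab, Set.mem_ofPred_eq, h1, h2, det_matrixOf, h4, h5]
  simp only [h.1, h.2, h3, basis_sum_inj, Intertwines]
  refine and_congr Iff.rfl (and_congr Iff.rfl ?_)
  rw [← Matrix.ext_iff, forall_comm]
  simp only [Matrix.mul_apply, mul_comm]

/-- Change of orthonormal basis by an orthogonal matrix `Q`. -/
lemma exists_basis (e : OrthonormalBasis (Fin 3) ℝ V₃) (Q : Matrix (Fin 3) (Fin 3) ℝ)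
    (hQ : Q.transpose * Q = 1) :
    ∃ f : OrthonormalBasis (Fin 3) ℝ V₃, ∀ j, f j = ∑ i, Q i j • e i := by
  have ho : Orthonormal ℝ (fun j => ∑ i, Q i j • e i) := by
    rw [orthonormal_iff_ite]
    intro i j
    have := congrFun (congrFun hQ i) j
    rw [Matrix.one_apply, Matrix.mul_apply] at this
    rw [← this]
    simp [sum_inner, inner_sum, inner_smul_left, inner_smul_right,
      orthonormal_iff_ite.mp e.orthonormal, mul_comm]
  have hc : Fintype.card (Fin 3) = Module.finrank ℝ V₃ := by simp
  refine ⟨(basisOfOrthonormalOfCardEqFinrank ho hc).toOrthonormalBasis (by simpa using ho), ?_⟩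
  simp

lemma matrixOf_change {e f : OrthonormalBasis (Fin 3) ℝ V₃} {Q : Matrix (Fin 3) (Fin 3) ℝ}
    (hf : ∀ j, f j = ∑ i, Q i j • e i) (g : V₃ ≃ₗᵢ[ℝ] V₃) :
    matrixOf f g = Q.transpose * matrixOf e g * Q := by
  ext i j
  simp only [matrixOf, Matrix.of_apply, hf, Matrix.mul_apply, Matrix.transpose_apply,
    Fin.sum_univ_three, map_add, map_smul, inner_add_left, inner_add_right, real_inner_smul_left,
    real_inner_smul_right]
  ring

lemma hasCoord_change {K : V₃ →ₗ[ℝ] V₃ →ₗ[ℝ] V₃} {S : V₃ →ₗ[ℝ] V₃}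
    {e f : OrthonormalBasis (Fin 3) ℝ V₃} {Q : Matrix (Fin 3) (Fin 3) ℝ}
    {k k' : Fin 3 → Fin 3 → Fin 3 → ℝ} {s s' : Matrix (Fin 3) (Fin 3) ℝ}
    (h : HasCoord K S e k s) (hf : ∀ j, f j = ∑ i, Q i j • e i)
    (hk : Intertwines Q k k') (hs : s * Q = Q * s') : HasCoord K S f k' s' := by
  constructor
  · intro i j
    have : ∑ l, k' i j l • f l = ∑ r, (∑ l, k' i j l * Q r l) • e r := by
      simp only [hf, Fin.sum_univ_three]
      module
    rw [this, hf i, hf j, K_expand h, basis_sum_inj]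
    exact hk i j
  · intro j
    have : ∑ l, s' l j • f l = ∑ r, (∑ l, Q r l * s' l j) • e r := by
      simp only [hf, Fin.sum_univ_three]
      module
    rw [this, hf j, S_expand h, basis_sum_inj]
    intro i
    have := congrFun (congrFun hs i) j
    rwa [Matrix.mul_apply, Matrix.mul_apply] at this

lemma stab_mul {K : V₃ →ₗ[ℝ] V₃ →ₗ[ℝ] V₃} {S : V₃ →ₗ[ℝ] V₃} {g h : V₃ ≃ₗᵢ[ℝ] V₃}
    (hg : g ∈ stab K S) (hh : h ∈ stab K S) : g * h ∈ stab K S := by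
  refine ⟨?_, fun X Y => ?_, fun X => ?_⟩
  · rw [← det_matrixOf stdB, matrixOf_mul, Matrix.det_mul, det_matrixOf, det_matrixOf, hg.1, hh.1,
      one_mul]
  · simp only [LinearIsometryEquiv.coe_mul, Function.comp_apply, hg.2.1, hh.2.1]
  · simp only [LinearIsometryEquiv.coe_mul, Function.comp_apply, hg.2.2, hh.2.2]

lemma stab_one (K : V₃ →ₗ[ℝ] V₃ →ₗ[ℝ] V₃) (S : V₃ →ₗ[ℝ] V₃) : 1 ∈ stab K S := by
  refine ⟨?_, fun X Y => ?_, fun X => ?_⟩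
  · rw [← det_matrixOf stdB, matrixOf_one, Matrix.det_one]
  · simp
  · simp

/-- A rotation has an axis: some orthonormal basis starts with a vector fixed by `g`. -/
lemma exists_axis (g : V₃ ≃ₗᵢ[ℝ] V₃)
    (hg : LinearMap.det (g.toLinearEquiv : V₃ →ₗ[ℝ] V₃) = 1) :
    ∃ e : OrthonormalBasis (Fin 3) ℝ V₃, g (e 0) = e 0 := by
  set M := matrixOf stdB g with hM
  have hdet : M.det = 1 := by rw [hM, det_matrixOf, hg]
  have hO : M.transpose * M = 1 := matrixOf_orth stdB g
  have h0 : (M - 1).det = 0 := by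
    -- `det (M - 1) = det (Mᵀ (M - 1)) = det (1 - M)ᵀ = -det (M - 1)` in odd dimension
    have h1 : (M.transpose * (M - 1)).det = (M - 1).det := by
      rw [Matrix.det_mul, Matrix.det_transpose, hdet, one_mul]
    have h2 : M.transpose * (M - 1) = (-(M - 1)).transpose := by
      rw [mul_sub, hO, mul_one]
      simp
    rw [h2, Matrix.det_transpose, Matrix.det_neg] at h1
    norm_num at h1
    linarith
  obtain ⟨v, hv, hMv⟩ := Matrix.exists_mulVec_eq_zero_iff.mpr h0
  have hfix : M.mulVec v = v := by
    rw [Matrix.sub_mulVec, Matrix.one_mulVec] at hMv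
    exact sub_eq_zero.mp hMv
  set w : V₃ := ∑ i, v i • stdB i with hw
  have hgw : g w = w := by
    have : g w = ∑ r, (∑ l, M r l * v l) • stdB r := by
      rw [hw]
      simp only [map_sum, map_smul, apply_basis stdB g]
      simp only [Fin.sum_univ_three, hM]
      module
    rw [this, hw, basis_sum_inj]
    intro i
    exact congrFun hfix i
  have hw0 : w ≠ 0 := by
    intro h
    apply hv
    have h3 : ∑ i, v i • stdB i = ∑ i, (0 : ℝ) • stdB i := by rw [← hw, h]; simp
    funext i
    exact (basis_sum_inj stdB v (fun _ => 0)).mp h3 i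
  have hc : Module.finrank ℝ V₃ = Fintype.card (Fin 3) := by simp
  obtain ⟨b, hb⟩ := Orthonormal.exists_orthonormalBasis_extension_of_card_eq (𝕜 := ℝ) hc
    (v := fun _ => (‖w‖⁻¹ : ℝ) • w) (s := {0}) (by
      constructor
      · intro i
        simp [norm_smul, hw0]
      · intro i j hij
        exact absurd (Subsingleton.elim i j) hij)
  refine ⟨b, ?_⟩
  rw [hb 0 rfl, map_smul, hgw]

/-! ### Rotation matrices -/

lemma orth_cols {M : Matrix (Fin 3) (Fin 3) ℝ} (hM : M.transpose * M = 1) (i j : Fin 3) :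
    M 0 i * M 0 j + M 1 i * M 1 j + M 2 i * M 2 j = if i = j then 1 else 0 := by
  have := congrFun (congrFun hM i) j
  rwa [Matrix.mul_apply, Fin.sum_univ_three, Matrix.one_apply] at this

lemma orth_rows {M : Matrix (Fin 3) (Fin 3) ℝ} (hM : M.transpose * M = 1) (i j : Fin 3) :
    M i 0 * M j 0 + M i 1 * M j 1 + M i 2 * M j 2 = if i = j then 1 else 0 := by
  have hM' : M * M.transpose = 1 := mul_eq_one_comm.mp hM
  have := congrFun (congrFun hM' i) j
  rwa [Matrix.mul_apply, Fin.sum_univ_three, Matrix.one_apply] at this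

lemma first_row_col {M : Matrix (Fin 3) (Fin 3) ℝ} (hM : M.transpose * M = 1)
    (h : M 0 0 ^ 2 = 1) : M 0 1 = 0 ∧ M 0 2 = 0 ∧ M 1 0 = 0 ∧ M 2 0 = 0 := by
  have h1 := orth_cols hM 0 0
  have h2 := orth_rows hM 0 0
  simp only [if_true] at h1 h2
  refine ⟨?_, ?_, ?_, ?_⟩ <;> nlinarith [sq_nonneg (M 0 1), sq_nonneg (M 0 2), sq_nonneg (M 1 0),
    sq_nonneg (M 2 0)]

/-- A rotation matrix whose first diagonal entry is `1` is a rotation about the first axis. -/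
lemma rot_form {M : Matrix (Fin 3) (Fin 3) ℝ} (hM : M.transpose * M = 1) (hd : M.det = 1)
    (h : M 0 0 = 1) :
    ∃ c s : ℝ, c ^ 2 + s ^ 2 = 1 ∧ M = !![1, 0, 0; 0, c, -s; 0, s, c] := by
  obtain ⟨h1, h2, h3, h4⟩ := first_row_col hM (by rw [h]; norm_num)
  have h5 := orth_cols hM 1 1
  have h6 := orth_cols hM 2 2
  simp only [if_true] at h5 h6
  rw [Matrix.det_fin_three, h, h1, h2, h3, h4] at hd
  rw [h1] at h5
  rw [h2] at h6
  have h7 : M 2 2 = M 1 1 := by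
    nlinarith [sq_nonneg (M 1 1 - M 2 2), sq_nonneg (M 1 2 + M 2 1)]
  have h8 : M 1 2 = - M 2 1 := by
    nlinarith [sq_nonneg (M 1 1 - M 2 2), sq_nonneg (M 1 2 + M 2 1)]
  refine ⟨M 1 1, M 2 1, by linarith, ?_⟩
  ext i j
  fin_cases i <;> fin_cases j <;> simp [h, h1, h2, h3, h4, h7, h8]

/-- A rotation matrix whose first diagonal entry is `-1` is a half-turn about an axis orthogonal
to the first one. -/
lemma flip_form {M : Matrix (Fin 3) (Fin 3) ℝ} (hM : M.transpose * M = 1) (hd : M.det = 1)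
    (h : M 0 0 = -1) :
    ∃ c s : ℝ, c ^ 2 + s ^ 2 = 1 ∧ M = !![-1, 0, 0; 0, c, s; 0, s, -c] := by
  obtain ⟨h1, h2, h3, h4⟩ := first_row_col hM (by rw [h]; norm_num)
  have h5 := orth_cols hM 1 1
  have h6 := orth_cols hM 2 2
  simp only [if_true] at h5 h6
  rw [Matrix.det_fin_three, h, h1, h2, h3, h4] at hd
  rw [h1] at h5
  rw [h2] at h6
  have h7 : M 2 2 = - M 1 1 := by
    nlinarith [sq_nonneg (M 1 1 + M 2 2), sq_nonneg (M 1 2 - M 2 1)]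
  have h8 : M 1 2 = M 2 1 := by
    nlinarith [sq_nonneg (M 1 1 + M 2 2), sq_nonneg (M 1 2 - M 2 1)]
  refine ⟨M 1 1, M 2 1, by linarith, ?_⟩
  ext i j
  fin_cases i <;> fin_cases j <;> simp [h, h1, h2, h3, h4, h7, h8]

lemma exists_angle {c s : ℝ} (h : c ^ 2 + s ^ 2 = 1) :
    ∃ θ : ℝ, c = Real.cos θ ∧ s = Real.sin θ := by
  have hn : ‖(⟨c, s⟩ : ℂ)‖ = 1 := by
    rw [Complex.norm_eq_sqrt_sq_add_sq, h, Real.sqrt_one]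
  have hne : (⟨c, s⟩ : ℂ) ≠ 0 := by
    intro h0
    rw [h0] at hn
    simp at hn
  refine ⟨Complex.arg ⟨c, s⟩, ?_, ?_⟩
  · rw [Complex.cos_arg hne, hn, div_one]
  · rw [Complex.sin_arg, hn, div_one]

/-! ### Normal form with a threefold axis -/

/-- Polar form through a cube root: `p + i q = μ (C + i D)³` with `|C + i D| = 1`. -/
lemma exists_cube_root (p q : ℝ) : ∃ C D μ : ℝ, C ^ 2 + D ^ 2 = 1 ∧
    p = μ * (C ^ 3 - 3 * C * D ^ 2) ∧ q = μ * (3 * C ^ 2 * D - D ^ 3) := by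
  set z : ℂ := ⟨p, q⟩
  set θ := z.arg / 3 with hθ
  have h3 : z.arg = 3 * θ := by rw [hθ]; ring
  have hsq := Real.cos_sq_add_sin_sq θ
  have hre : p = ‖z‖ * Real.cos z.arg := (Complex.norm_mul_cos_arg z).symm
  have him : q = ‖z‖ * Real.sin z.arg := (Complex.norm_mul_sin_arg z).symm
  refine ⟨Real.cos θ, Real.sin θ, ‖z‖, hsq, ?_, ?_⟩
  · rw [hre, h3, Real.cos_three_mul]
    linear_combination (3 * ‖z‖ * Real.cos θ) * hsq
  · rw [him, h3, Real.sin_three_mul]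
    linear_combination (-3 * ‖z‖ * Real.sin θ) * hsq

/-- The cubic coefficients invariant under a rotation by `2π/3` about the first basis vector,
normalised by a rotation about that vector: the cubic form is
`lam (2 x³ - 3 x (y² + z²)) + mu (y³ - 3 y z²)`. -/
def z3K (lam mu : ℝ) : Fin 3 → Fin 3 → Fin 3 → ℝ :=
  ![![![2 * lam, 0, 0], ![0, -lam, 0], ![0, 0, -lam]],
    ![![0, -lam, 0], ![-lam, mu, 0], ![0, 0, -mu]],
    ![![0, 0, -lam], ![0, 0, -mu], ![-lam, -mu, 0]]]

/-- The matrix `diag (a, b, b)`. -/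
def z3S (a b : ℝ) : Matrix (Fin 3) (Fin 3) ℝ := !![a, 0, 0; 0, b, 0; 0, 0, b]

/-- Turning the basis about the first vector by the argument of `C + i D` removes the phase
`(C + i D)³` of the weight-three part. -/
lemma intertwines_turn (m mu : ℝ) {C D : ℝ} (h : C ^ 2 + D ^ 2 = 1) :
    Intertwines !![1, 0, 0; 0, C, -D; 0, D, C]
      ![![![-2 * m, 0, 0], ![0, m, 0], ![0, 0, m]],
        ![![0, m, 0], ![m, mu * (C ^ 3 - 3 * C * D ^ 2), mu * (3 * C ^ 2 * D - D ^ 3)],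
          ![0, mu * (3 * C ^ 2 * D - D ^ 3), -(mu * (C ^ 3 - 3 * C * D ^ 2))]],
        ![![0, 0, m], ![0, mu * (3 * C ^ 2 * D - D ^ 3), -(mu * (C ^ 3 - 3 * C * D ^ 2))],
          ![m, -(mu * (C ^ 3 - 3 * C * D ^ 2)), -(mu * (3 * C ^ 2 * D - D ^ 3))]]]
      (z3K (-m) mu) := by
  have hD : D ^ 2 = 1 - C ^ 2 := by linarith
  intro i j r
  fin_cases i <;> fin_cases j <;> fin_cases r <;>
    simp [z3K, Fin.sum_univ_three] <;> grind

/-- A plane rotation with nonzero sine `t` has no nonzero fixed vector. -/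
lemma weight_one_zero {c t u v : ℝ} (ht : t ≠ 0) (h1 : u = u * c + -(v * t))
    (h2 : v = u * t + v * c) : u = 0 ∧ v = 0 := by
  have h3 : u * ((1 - c) ^ 2 + t ^ 2) = 0 := by linear_combination (1 - c) * h1 - t * h2
  have h4 : v * ((1 - c) ^ 2 + t ^ 2) = 0 := by linear_combination t * h1 + (1 - c) * h2
  have h5 : (1 - c) ^ 2 + t ^ 2 ≠ 0 := by positivity
  exact ⟨(mul_eq_zero.mp h3).resolve_right h5, (mul_eq_zero.mp h4).resolve_right h5⟩

/-- If the stabilizer contains an element which is not an involution, then in a suitable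
orthonormal basis `(K, S)` is invariant under the rotation by `2π/3` about the first vector:
the components of weight one and two of `K` and `S` along the axis vanish, and the one of
weight three is made real by turning the basis. -/
lemma exists_z3_coord {K : V₃ →ₗ[ℝ] V₃ →ₗ[ℝ] V₃} {S : V₃ →ₗ[ℝ] V₃}
    (hK : IsAdmissibleK K) (hS : IsSymmEndo S) {g : V₃ ≃ₗᵢ[ℝ] V₃} (hg : g ∈ stab K S)
    (hg2 : g * g ≠ 1) :
    ∃ (e : OrthonormalBasis (Fin 3) ℝ V₃) (lam mu a b : ℝ),
      HasCoord K S e (z3K lam mu) (z3S a b) := by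
  obtain ⟨e, he⟩ := exists_axis g hg.1
  set k : Fin 3 → Fin 3 → Fin 3 → ℝ := fun i j l => ⟪e l, K (e i) (e j)⟫ with hk
  set s : Matrix (Fin 3) (Fin 3) ℝ := Matrix.of fun i j => ⟪e i, S (e j)⟫ with hs
  have hc : HasCoord K S e k s :=
    ⟨fun i j => (e.sum_repr' _).symm, fun j => (e.sum_repr' _).symm⟩
  obtain ⟨hd, hI, hsM⟩ := (mem_stab_iff hc g).mp hg
  have h00 : matrixOf e g 0 0 = 1 := by
    simp [matrixOf, he]
  obtain ⟨c, t, hct, hM⟩ := rot_form (matrixOf_orth e g) hd h00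
  have ht : t ≠ 0 := by
    rintro rfl
    apply hg2
    apply matrixOf_injective e
    rw [matrixOf_mul, matrixOf_one, hM]
    ext i j
    have : c * c = 1 := by linarith
    fin_cases i <;> fin_cases j <;> simp [Matrix.mul_apply, Fin.sum_univ_three, this]
  have hsym1 : ∀ i j l, k i j l = k j i l := fun i j l => by
    simp only [hk, hK.1 (e i) (e j)]
  have hsym2 : ∀ i j l, k i j l = k i l j := fun i j l => by
    simp only [hk]
    rw [real_inner_comm, hK.2.1, real_inner_comm]
  have htr : ∀ i, k i 0 0 + k i 1 1 + k i 2 2 = 0 := fun i => by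
    have := hK.2.2 (e i)
    rw [LinearMap.trace_eq_sum_inner _ e, Fin.sum_univ_three] at this
    exact this
  have hss : ∀ i j, s i j = s j i := fun i j => by
    simp only [hs, Matrix.of_apply]
    rw [← hS, real_inner_comm]
  rw [hM] at hI hsM
  have E : ∀ i j r, _ := hI
  simp only [Fin.sum_univ_three] at E
  -- invariance of the components of `K` and `S` of weight one and two under the rotation `g`
  have e001 := E 0 0 1
  have e002 := E 0 0 2
  have e011 := E 0 1 1
  have e012 := E 0 1 2
  have f01 := congrFun (congrFun hsM 0) 1
  have f02 := congrFun (congrFun hsM 0) 2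
  have f11 := congrFun (congrFun hsM 1) 1
  have f12 := congrFun (congrFun hsM 1) 2
  simp [Matrix.mul_apply, Fin.sum_univ_three] at e001 e002 e011 e012 f01 f02 f11 f12
  obtain ⟨k001, k002⟩ := weight_one_zero ht e001 e002
  have k012 : k 0 1 2 = 0 := by
    have := hsym2 0 2 1
    refine (mul_eq_zero.mp (?_ : t * k 0 1 2 = 0)).resolve_left ht
    rw [this] at e011
    linarith
  have k022 : k 0 2 2 = k 0 1 1 := mul_left_cancel₀ ht (by linarith)
  obtain ⟨s02, s01⟩ := weight_one_zero (c := c) (u := s 0 2) (v := s 0 1) ht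
    (by linarith) (by linarith)
  have s12 : s 1 2 = 0 := by
    refine (mul_eq_zero.mp (?_ : t * s 1 2 = 0)).resolve_left ht
    rw [hss 2 1] at f11
    linarith
  have s22 : s 2 2 = s 1 1 := mul_left_cancel₀ ht (by linarith)
  have s10 : s 1 0 = 0 := (hss 1 0).trans s01
  have s20 : s 2 0 = 0 := (hss 2 0).trans s02
  have s21 : s 2 1 = 0 := (hss 2 1).trans s12
  obtain ⟨C, D, mu, hCD, hp, hq⟩ := exists_cube_root (k 1 1 1) (k 1 1 2)
  set Q : Matrix (Fin 3) (Fin 3) ℝ := !![1, 0, 0; 0, C, -D; 0, D, C] with hQ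
  obtain ⟨f, hf⟩ := exists_basis e Q (by
    ext i j
    fin_cases i <;> fin_cases j <;> simp [hQ, Matrix.mul_apply, Fin.sum_univ_three] <;> grind)
  refine ⟨f, - k 0 1 1, mu, s 0 0, s 1 1, hasCoord_change hc hf ?_ ?_⟩
  · have t0 := htr 0
    have t1 := htr 1
    have t2 := htr 2
    have x100 : k 1 0 0 = 0 := by rw [hsym1 1 0 0, hsym2 0 1 0, k001]
    have x200 : k 2 0 0 = 0 := by rw [hsym1 2 0 0, hsym2 0 2 0, k002]
    have x211 : k 2 1 1 = k 1 1 2 := by rw [hsym1 2 1 1, hsym2 1 2 1]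
    have x000 : k 0 0 0 = -2 * k 0 1 1 := by linarith
    have x122 : k 1 2 2 = -k 1 1 1 := by linarith
    have x222 : k 2 2 2 = -k 1 1 2 := by linarith
    have x010 : k 0 1 0 = 0 := by rw [hsym2 0 1 0, k001]
    have x020 : k 0 2 0 = 0 := by rw [hsym2 0 2 0, k002]
    have x021 : k 0 2 1 = 0 := by rw [hsym2 0 2 1, k012]
    have x101 : k 1 0 1 = k 0 1 1 := by rw [hsym1 1 0 1]
    have x102 : k 1 0 2 = 0 := by rw [hsym1 1 0 2, k012]
    have x110 : k 1 1 0 = k 0 1 1 := by rw [hsym2 1 1 0, hsym1 1 0 1]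
    have x120 : k 1 2 0 = 0 := by rw [hsym2 1 2 0, hsym1 1 0 2, k012]
    have x121 : k 1 2 1 = k 1 1 2 := by rw [hsym2 1 2 1]
    have x201 : k 2 0 1 = 0 := by rw [hsym1 2 0 1, hsym2 0 2 1, k012]
    have x202 : k 2 0 2 = k 0 1 1 := by rw [hsym1 2 0 2, k022]
    have x210 : k 2 1 0 = 0 := by rw [hsym1 2 1 0, hsym2 1 2 0, hsym1 1 0 2, k012]
    have x212 : k 2 1 2 = -k 1 1 1 := by rw [hsym1 2 1 2, x122]
    have x220 : k 2 2 0 = k 0 1 1 := by rw [hsym2 2 2 0, hsym1 2 0 2, k022]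
    have x221 : k 2 2 1 = -k 1 1 1 := by rw [hsym2 2 2 1, hsym1 2 1 2, x122]
    clear_value k
    have key : k = ![![![-2 * k 0 1 1, 0, 0], ![0, k 0 1 1, 0], ![0, 0, k 0 1 1]],
        ![![0, k 0 1 1, 0], ![k 0 1 1, k 1 1 1, k 1 1 2], ![0, k 1 1 2, -k 1 1 1]],
        ![![0, 0, k 0 1 1], ![0, k 1 1 2, -k 1 1 1], ![k 0 1 1, -k 1 1 1, -k 1 1 2]]] := by
      funext i j l
      fin_cases i <;> fin_cases j <;> fin_cases l <;> first | rfl | assumption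
    rw [hp, hq] at key
    rw [key]
    exact intertwines_turn _ _ hCD
  · clear_value s
    ext i j
    fin_cases i <;> fin_cases j <;>
      simp [hQ, z3S, Matrix.mul_apply, Fin.sum_univ_three, s01, s02, s12, s10, s20, s21, s22,
        mul_comm]

/-! ### Preservation of the axis -/

/-- The matrix of `K v` in the basis `e`. -/
lemma toMatrix_K {K : V₃ →ₗ[ℝ] V₃ →ₗ[ℝ] V₃} {S : V₃ →ₗ[ℝ] V₃} {e : OrthonormalBasis (Fin 3) ℝ V₃}
    {k : Fin 3 → Fin 3 → Fin 3 → ℝ} {s : Matrix (Fin 3) (Fin 3) ℝ}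
    (h : HasCoord K S e k s) (a : Fin 3 → ℝ) :
    LinearMap.toMatrix e.toBasis e.toBasis (K (∑ i, a i • e i)) =
      Matrix.of fun r q => ∑ p, a p * k p q r := by
  ext r q
  simp only [LinearMap.toMatrix_apply, OrthonormalBasis.coe_toBasis, map_sum, map_smul,
    LinearMap.sum_apply, LinearMap.smul_apply, h.1, Matrix.of_apply]
  simp

/-- The quadratic form `X ↦ tr (K_X ∘ K_X)` is invariant under the stabilizer. -/
lemma trace_K_sq {K : V₃ →ₗ[ℝ] V₃ →ₗ[ℝ] V₃} {S : V₃ →ₗ[ℝ] V₃} {g : V₃ ≃ₗᵢ[ℝ] V₃}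
    (hg : g ∈ stab K S) (X : V₃) :
    LinearMap.trace ℝ V₃ (K (g X) * K (g X)) = LinearMap.trace ℝ V₃ (K X * K X) := by
  rw [← LinearMap.trace_conj' (K X * K X) g.toLinearEquiv]
  congr 1
  ext1 Y
  have h : ∀ Z, K (g X) Z = g (K X (g.symm Z)) := by
    intro Z
    rw [← hg.2.1, g.apply_symm_apply]
  simp [LinearEquiv.conj_apply, h]

lemma first_col_norm_sq {M : Matrix (Fin 3) (Fin 3) ℝ} (hM : M.transpose * M = 1) :
    M 0 0 ^ 2 + M 1 0 ^ 2 + M 2 0 ^ 2 = 1 := by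
  have h := orth_cols hM 0 0
  simp only [if_true] at h
  linarith

/-- The stabilizer of `S = diag (a, b, b)` with `a ≠ b` preserves the axis. -/
lemma axis_of_S {K : V₃ →ₗ[ℝ] V₃ →ₗ[ℝ] V₃} {S : V₃ →ₗ[ℝ] V₃} {e : OrthonormalBasis (Fin 3) ℝ V₃}
    {lam mu a b : ℝ} (h : HasCoord K S e (z3K lam mu) (z3S a b)) (hab : a ≠ b)
    {g : V₃ ≃ₗᵢ[ℝ] V₃} (hg : g ∈ stab K S) : matrixOf e g 0 0 ^ 2 = 1 := by
  obtain ⟨-, -, hs⟩ := (mem_stab_iff h g).mp hg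
  have h1 := congrFun (congrFun hs 1) 0
  have h2 := congrFun (congrFun hs 2) 0
  simp [Matrix.mul_apply, Fin.sum_univ_three, z3S] at h1 h2
  have hc := first_col_norm_sq (matrixOf_orth e g)
  have h1' : matrixOf e g 1 0 = 0 := by
    have : (a - b) * matrixOf e g 1 0 = 0 := by linarith
    exact (mul_eq_zero.mp this).resolve_left (sub_ne_zero.mpr hab)
  have h2' : matrixOf e g 2 0 = 0 := by
    have : (a - b) * matrixOf e g 2 0 = 0 := by linarith
    exact (mul_eq_zero.mp this).resolve_left (sub_ne_zero.mpr hab)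
  rw [h1', h2'] at hc
  linarith

/-- The form `tr (K_X ∘ K_X)` is `diag (6 lam², 2 lam² + 2 mu², 2 lam² + 2 mu²)`, so that the
stabilizer of `K` preserves the axis unless `mu² = 2 lam²`. -/
lemma axis_of_K {K : V₃ →ₗ[ℝ] V₃ →ₗ[ℝ] V₃} {S : V₃ →ₗ[ℝ] V₃} {e : OrthonormalBasis (Fin 3) ℝ V₃}
    {lam mu a b : ℝ} (h : HasCoord K S e (z3K lam mu) (z3S a b)) (hlm : mu ^ 2 ≠ 2 * lam ^ 2)
    {g : V₃ ≃ₗᵢ[ℝ] V₃} (hg : g ∈ stab K S) : matrixOf e g 0 0 ^ 2 = 1 := by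
  have hc := first_col_norm_sq (matrixOf_orth e g)
  have ht := trace_K_sq hg (e 0)
  have he : e 0 = ∑ i, (![1, 0, 0] : Fin 3 → ℝ) i • e i := by simp [Fin.sum_univ_three]
  rw [apply_basis e g 0, he, LinearMap.trace_eq_matrix_trace ℝ e.toBasis,
    LinearMap.trace_eq_matrix_trace ℝ e.toBasis, LinearMap.toMatrix_mul, LinearMap.toMatrix_mul,
    toMatrix_K h, toMatrix_K h, Matrix.trace_fin_three, Matrix.trace_fin_three] at ht
  simp [Matrix.mul_apply, Fin.sum_univ_three, z3K] at ht
  have : (mu ^ 2 - 2 * lam ^ 2) * (1 - matrixOf e g 0 0 ^ 2) = 0 := by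
    linear_combination ht / 2 - (mu ^ 2 + lam ^ 2) * hc
  have := (mul_eq_zero.mp this).resolve_left (sub_ne_zero.mpr hlm)
  linarith

/-- If `lam ≠ 0`, the stabilizer cannot reverse the axis. -/
lemma fix_of_axis {K : V₃ →ₗ[ℝ] V₃ →ₗ[ℝ] V₃} {S : V₃ →ₗ[ℝ] V₃} {e : OrthonormalBasis (Fin 3) ℝ V₃}
    {lam mu a b : ℝ} (h : HasCoord K S e (z3K lam mu) (z3S a b)) (hl : lam ≠ 0)
    {g : V₃ ≃ₗᵢ[ℝ] V₃} (hg : g ∈ stab K S) (hx : matrixOf e g 0 0 ^ 2 = 1) :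
    matrixOf e g 0 0 = 1 := by
  obtain ⟨-, hI, -⟩ := (mem_stab_iff h g).mp hg
  obtain ⟨-, -, h1, h2⟩ := first_row_col (matrixOf_orth e g) hx
  have h3 := hI 0 0 0
  simp [Fin.sum_univ_three, z3K, h1, h2] at h3
  have : 2 * lam * (1 - matrixOf e g 0 0) = 0 := by
    linear_combination h3 - 2 * lam * hx
  have := (mul_eq_zero.mp this).resolve_left (by simpa using hl)
  linarith

/-! ### The continuous groups -/

lemma rot_intertwines (lam : ℝ) {c s : ℝ} (h : c ^ 2 + s ^ 2 = 1) :
    Intertwines !![1, 0, 0; 0, c, -s; 0, s, c] (z3K lam 0) (z3K lam 0) := by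
  intro i j r
  fin_cases i <;> fin_cases j <;> fin_cases r <;> simp [z3K, Fin.sum_univ_three] <;> grind

lemma z3K_zero : z3K 0 0 = 0 := by
  funext i j l
  fin_cases i <;> fin_cases j <;> fin_cases l <;> simp [z3K]

lemma intertwines_zero (M : Matrix (Fin 3) (Fin 3) ℝ) : Intertwines M (z3K 0 0) (z3K 0 0) := by
  intro i j r
  simp [z3K_zero]

lemma det_rot {c s : ℝ} (h : c ^ 2 + s ^ 2 = 1) :
    (!![1, 0, 0; 0, c, -s; 0, s, c] : Matrix (Fin 3) (Fin 3) ℝ).det = 1 := by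
  simp [Matrix.det_fin_three]
  linarith

lemma det_flip {c s : ℝ} (h : c ^ 2 + s ^ 2 = 1) :
    (!![-1, 0, 0; 0, c, s; 0, s, -c] : Matrix (Fin 3) (Fin 3) ℝ).det = 1 := by
  simp [Matrix.det_fin_three]
  linarith

lemma z3S_comm_rot (a b c s : ℝ) :
    z3S a b * !![1, 0, 0; 0, c, -s; 0, s, c] = !![1, 0, 0; 0, c, -s; 0, s, c] * z3S a b := by
  ext i j
  fin_cases i <;> fin_cases j <;> simp [z3S, Matrix.mul_apply, Fin.sum_univ_three, mul_comm]

lemma z3S_comm_flip (a b c s : ℝ) :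
    z3S a b * !![-1, 0, 0; 0, c, s; 0, s, -c] = !![-1, 0, 0; 0, c, s; 0, s, -c] * z3S a b := by
  ext i j
  fin_cases i <;> fin_cases j <;> simp [z3S, Matrix.mul_apply, Fin.sum_univ_three, mul_comm]

lemma mem_rotSet_iff {e : OrthonormalBasis (Fin 3) ℝ V₃} {g : V₃ ≃ₗᵢ[ℝ] V₃} :
    g ∈ rotSet e ↔ ∃ c s : ℝ, c ^ 2 + s ^ 2 = 1 ∧
      matrixOf e g = !![1, 0, 0; 0, c, -s; 0, s, c] := by
  constructor
  · rintro ⟨θ, h⟩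
    exact ⟨_, _, Real.cos_sq_add_sin_sq θ, h⟩
  · rintro ⟨c, s, hcs, h⟩
    obtain ⟨θ, rfl, rfl⟩ := exists_angle hcs
    exact ⟨θ, h⟩

lemma mem_flipSet_iff {e : OrthonormalBasis (Fin 3) ℝ V₃} {g : V₃ ≃ₗᵢ[ℝ] V₃} :
    g ∈ flipSet e ↔ ∃ c s : ℝ, c ^ 2 + s ^ 2 = 1 ∧
      matrixOf e g = !![-1, 0, 0; 0, c, s; 0, s, -c] := by
  constructor
  · rintro ⟨θ, h⟩
    exact ⟨_, _, Real.cos_sq_add_sin_sq θ, h⟩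
  · rintro ⟨c, s, hcs, h⟩
    obtain ⟨θ, rfl, rfl⟩ := exists_angle hcs
    exact ⟨θ, h⟩

lemma stab_eq_rotSet {K : V₃ →ₗ[ℝ] V₃ →ₗ[ℝ] V₃} {S : V₃ →ₗ[ℝ] V₃}
    {e : OrthonormalBasis (Fin 3) ℝ V₃} {lam a b : ℝ}
    (h : HasCoord K S e (z3K lam 0) (z3S a b)) (hl : lam ≠ 0) : stab K S = rotSet e := by
  ext g
  rw [mem_rotSet_iff]
  constructor
  · intro hg
    have hx := axis_of_K h (by have : 0 < lam ^ 2 := by positivity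
                               intro h0; linarith) hg
    exact rot_form (matrixOf_orth e g) ((mem_stab_iff h g).mp hg).1 (fix_of_axis h hl hg hx)
  · rintro ⟨c, s, hcs, hM⟩
    rw [mem_stab_iff h, hM]
    exact ⟨det_rot hcs, rot_intertwines lam hcs, z3S_comm_rot a b c s⟩

lemma eq_one_or_neg_one {x : ℝ} (h : x ^ 2 = 1) : x = 1 ∨ x = -1 :=
  mul_self_eq_one_iff.mp (by rw [← sq, h])

lemma stab_eq_rotSet_union {K : V₃ →ₗ[ℝ] V₃ →ₗ[ℝ] V₃} {S : V₃ →ₗ[ℝ] V₃}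
    {e : OrthonormalBasis (Fin 3) ℝ V₃} {a b : ℝ}
    (h : HasCoord K S e (z3K 0 0) (z3S a b)) (hab : a ≠ b) :
    stab K S = rotSet e ∪ flipSet e := by
  ext g
  rw [Set.mem_union, mem_rotSet_iff, mem_flipSet_iff]
  constructor
  · intro hg
    have hd := ((mem_stab_iff h g).mp hg).1
    rcases eq_one_or_neg_one (axis_of_S h hab hg) with hx | hx
    · exact Or.inl (rot_form (matrixOf_orth e g) hd hx)
    · exact Or.inr (flip_form (matrixOf_orth e g) hd hx)
  · rintro (⟨c, s, hcs, hM⟩ | ⟨c, s, hcs, hM⟩)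
    · rw [mem_stab_iff h, hM]
      exact ⟨det_rot hcs, intertwines_zero _, z3S_comm_rot a b c s⟩
    · rw [mem_stab_iff h, hM]
      exact ⟨det_flip hcs, intertwines_zero _, z3S_comm_flip a b c s⟩

lemma z3S_scalar (a : ℝ) : z3S a a = a • (1 : Matrix (Fin 3) (Fin 3) ℝ) := by
  ext i j
  fin_cases i <;> fin_cases j <;> simp [z3S]

lemma stab_eq_so3Set {K : V₃ →ₗ[ℝ] V₃ →ₗ[ℝ] V₃} {S : V₃ →ₗ[ℝ] V₃}
    {e : OrthonormalBasis (Fin 3) ℝ V₃} {a : ℝ}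
    (h : HasCoord K S e (z3K 0 0) (z3S a a)) : stab K S = so3Set := by
  ext g
  rw [mem_stab_iff h, det_matrixOf]
  refine ⟨fun hg => hg.1, fun hg => ⟨hg, intertwines_zero _, ?_⟩⟩
  simp [z3S_scalar]

/-! ### The groups of order three and six -/

/-- The solutions of `(c + i s)² = c - i s` on the unit circle are the cube roots of unity. -/
lemma cube_root_unity {c s : ℝ} (h : c ^ 2 + s ^ 2 = 1) (h1 : c ^ 2 - s ^ 2 = c)
    (h2 : -(2 * c * s) = s) :
    (c = 1 ∧ s = 0) ∨ (c = -(1 / 2) ∧ s = Real.sqrt 3 / 2) ∨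
      (c = -(1 / 2) ∧ s = -(Real.sqrt 3 / 2)) := by
  have h3 : Real.sqrt 3 ^ 2 = 3 := Real.sq_sqrt (by norm_num)
  by_cases hs : s = 0
  · left
    subst hs
    constructor <;> nlinarith
  · right
    have hc : c = -(1 / 2) := by
      have : s * (c + 1 / 2) = 0 := by linarith
      have := (mul_eq_zero.mp this).resolve_left hs
      linarith
    subst hc
    have : (s - Real.sqrt 3 / 2) * (s + Real.sqrt 3 / 2) = 0 := by nlinarith
    rcases mul_eq_zero.mp this with h4 | h4
    · left
      exact ⟨rfl, by linarith⟩
    · right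
      exact ⟨rfl, by linarith⟩

/-- The equations expressing `(c + i s)² = c - i s` on the unit circle, that is,
`(c + i s)³ = 1`. -/
def IsCubeRoot (c s : ℝ) : Prop :=
  c ^ 2 + s ^ 2 = 1 ∧ c ^ 2 - s ^ 2 = c ∧ -(2 * c * s) = s

lemma isCubeRoot_iff {c s : ℝ} : IsCubeRoot c s ↔
    (c = 1 ∧ s = 0) ∨ (c = -(1 / 2) ∧ s = Real.sqrt 3 / 2) ∨
      (c = -(1 / 2) ∧ s = -(Real.sqrt 3 / 2)) := by
  constructor
  · rintro ⟨h, h1, h2⟩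
    exact cube_root_unity h h1 h2
  · have h3 : Real.sqrt 3 ^ 2 = 3 := Real.sq_sqrt (by norm_num)
    rintro (⟨rfl, rfl⟩ | ⟨rfl, rfl⟩ | ⟨rfl, rfl⟩)
    · norm_num [IsCubeRoot]
    · refine ⟨?_, ?_, ?_⟩ <;> linarith
    · refine ⟨?_, ?_, ?_⟩ <;> linarith

lemma isCubeRoot_of_intertwines {M : Matrix (Fin 3) (Fin 3) ℝ} {lam mu : ℝ} (hmu : mu ≠ 0)
    (h : Intertwines M (z3K lam mu) (z3K lam mu)) (h0 : M 0 1 = 0) (h1 : M 1 0 = 0)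
    (h2 : M 2 0 = 0) (hn : M 1 1 ^ 2 + M 2 1 ^ 2 = 1) : IsCubeRoot (M 1 1) (M 2 1) := by
  have e1 := h 1 1 1
  have e2 := h 1 1 2
  simp [Fin.sum_univ_three, z3K, h0, h1, h2] at e1 e2
  refine ⟨hn, mul_left_cancel₀ hmu ?_, mul_left_cancel₀ hmu ?_⟩ <;> linarith

lemma rot_intertwines_cube (lam mu : ℝ) {c s : ℝ} (h : IsCubeRoot c s) :
    Intertwines !![1, 0, 0; 0, c, -s; 0, s, c] (z3K lam mu) (z3K lam mu) := by
  obtain ⟨h1, h2, h3⟩ := h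
  intro i j r
  fin_cases i <;> fin_cases j <;> fin_cases r <;> simp [z3K, Fin.sum_univ_three] <;> grind

lemma flip_intertwines_cube (mu : ℝ) {c s : ℝ} (h : IsCubeRoot c s) :
    Intertwines !![-1, 0, 0; 0, c, s; 0, s, -c] (z3K 0 mu) (z3K 0 mu) := by
  obtain ⟨h1, h2, h3⟩ := h
  intro i j r
  fin_cases i <;> fin_cases j <;> fin_cases r <;> simp [z3K, Fin.sum_univ_three] <;> grind

lemma rot_cube_of_mem {K : V₃ →ₗ[ℝ] V₃ →ₗ[ℝ] V₃} {S : V₃ →ₗ[ℝ] V₃}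
    {e : OrthonormalBasis (Fin 3) ℝ V₃} {lam mu a b : ℝ}
    (h : HasCoord K S e (z3K lam mu) (z3S a b)) (hmu : mu ≠ 0) {g : V₃ ≃ₗᵢ[ℝ] V₃}
    (hg : g ∈ stab K S) (hx : matrixOf e g 0 0 = 1) :
    ∃ c s, IsCubeRoot c s ∧ matrixOf e g = !![1, 0, 0; 0, c, -s; 0, s, c] := by
  obtain ⟨hd, hI, -⟩ := (mem_stab_iff h g).mp hg
  obtain ⟨c, s, hcs, hM⟩ := rot_form (matrixOf_orth e g) hd hx
  rw [hM] at hI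
  exact ⟨c, s, isCubeRoot_of_intertwines hmu hI rfl rfl rfl hcs, hM⟩

lemma flip_cube_of_mem {K : V₃ →ₗ[ℝ] V₃ →ₗ[ℝ] V₃} {S : V₃ →ₗ[ℝ] V₃}
    {e : OrthonormalBasis (Fin 3) ℝ V₃} {lam mu a b : ℝ}
    (h : HasCoord K S e (z3K lam mu) (z3S a b)) (hmu : mu ≠ 0) {g : V₃ ≃ₗᵢ[ℝ] V₃}
    (hg : g ∈ stab K S) (hx : matrixOf e g 0 0 = -1) :
    ∃ c s, IsCubeRoot c s ∧ matrixOf e g = !![-1, 0, 0; 0, c, s; 0, s, -c] := by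
  obtain ⟨hd, hI, -⟩ := (mem_stab_iff h g).mp hg
  obtain ⟨c, s, hcs, hM⟩ := flip_form (matrixOf_orth e g) hd hx
  rw [hM] at hI
  exact ⟨c, s, isCubeRoot_of_intertwines hmu hI rfl rfl rfl hcs, hM⟩

lemma sqrt_three_mul_self : Real.sqrt 3 * Real.sqrt 3 = 3 :=
  Real.mul_self_sqrt (by norm_num)

lemma R1mat_sq : R1mat * R1mat =
    !![1, 0, 0; 0, -(1/2), Real.sqrt 3/2; 0, -(Real.sqrt 3/2), -(1/2)] := by
  have := sqrt_three_mul_self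
  ext i j
  fin_cases i <;> fin_cases j <;> simp [R1mat, Matrix.mul_apply, Fin.sum_univ_three] <;> grind

lemma R3mat_sq : R3mat * R3mat =
    !![-(1/2), Real.sqrt 3/2, 0; -(Real.sqrt 3/2), -(1/2), 0; 0, 0, 1] := by
  have := sqrt_three_mul_self
  ext i j
  fin_cases i <;> fin_cases j <;> simp [R3mat, Matrix.mul_apply, Fin.sum_univ_three] <;> grind

lemma P1mat_R3mat : P1mat * R3mat =
    !![-(1/2), -(Real.sqrt 3/2), 0; -(Real.sqrt 3/2), 1/2, 0; 0, 0, -1] := by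
  ext i j
  fin_cases i <;> fin_cases j <;> simp [R3mat, P1mat, Matrix.mul_apply, Fin.sum_univ_three]

lemma R3mat_P1mat : R3mat * P1mat =
    !![-(1/2), Real.sqrt 3/2, 0; Real.sqrt 3/2, 1/2, 0; 0, 0, -1] := by
  ext i j
  fin_cases i <;> fin_cases j <;> simp [R3mat, P1mat, Matrix.mul_apply, Fin.sum_univ_three]

lemma mem_z3MatSet_iff (M : Matrix (Fin 3) (Fin 3) ℝ) :
    M ∈ z3MatSet ↔ ∃ c s, IsCubeRoot c s ∧ M = !![1, 0, 0; 0, c, -s; 0, s, c] := by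
  simp only [isCubeRoot_iff]
  simp only [z3MatSet, Set.mem_insert_iff, Set.mem_singleton_iff, R1mat_sq]
  constructor
  · rintro (rfl | rfl | rfl)
    · exact ⟨1, 0, by simp, by simp [Matrix.one_fin_three]⟩
    · exact ⟨_, _, Or.inr (Or.inl ⟨rfl, rfl⟩), rfl⟩
    · exact ⟨_, _, Or.inr (Or.inr ⟨rfl, rfl⟩), by simp⟩
  · rintro ⟨c, s, ⟨rfl, rfl⟩ | ⟨rfl, rfl⟩ | ⟨rfl, rfl⟩, rfl⟩
    · left; simp [Matrix.one_fin_three]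
    · right; left; rfl
    · right; right; simp

lemma mem_s3MatSet_iff (M : Matrix (Fin 3) (Fin 3) ℝ) :
    M ∈ s3MatSet ↔ (∃ c s, IsCubeRoot c s ∧ M = !![c, -s, 0; s, c, 0; 0, 0, 1]) ∨
      ∃ c s, IsCubeRoot c s ∧ M = !![c, s, 0; s, -c, 0; 0, 0, -1] := by
  simp only [isCubeRoot_iff]
  simp only [s3MatSet, Set.mem_insert_iff, Set.mem_singleton_iff, R3mat_sq, P1mat_R3mat,
    R3mat_P1mat]
  constructor
  · rintro (rfl | rfl | rfl | rfl | rfl | rfl)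
    · exact Or.inl ⟨1, 0, by simp, by simp [Matrix.one_fin_three]⟩
    · exact Or.inl ⟨_, _, Or.inr (Or.inl ⟨rfl, rfl⟩), rfl⟩
    · exact Or.inl ⟨_, _, Or.inr (Or.inr ⟨rfl, rfl⟩), by simp⟩
    · exact Or.inr ⟨1, 0, by simp, by simp [P1mat]⟩
    · exact Or.inr ⟨_, _, Or.inr (Or.inr ⟨rfl, rfl⟩), by simp⟩
    · exact Or.inr ⟨_, _, Or.inr (Or.inl ⟨rfl, rfl⟩), by simp⟩
  · rintro (⟨c, s, ⟨rfl, rfl⟩ | ⟨rfl, rfl⟩ | ⟨rfl, rfl⟩, rfl⟩ |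
      ⟨c, s, ⟨rfl, rfl⟩ | ⟨rfl, rfl⟩ | ⟨rfl, rfl⟩, rfl⟩)
    · simp [Matrix.one_fin_three]
    · simp [R3mat]
    · simp
    · simp [P1mat]
    · simp
    · simp

lemma stab_eq_z3 {K : V₃ →ₗ[ℝ] V₃ →ₗ[ℝ] V₃} {S : V₃ →ₗ[ℝ] V₃}
    {e : OrthonormalBasis (Fin 3) ℝ V₃} {lam mu a b : ℝ}
    (h : HasCoord K S e (z3K lam mu) (z3S a b)) (hl : lam ≠ 0) (hmu : mu ≠ 0)
    (hax : ∀ g ∈ stab K S, matrixOf e g 0 0 ^ 2 = 1) :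
    stab K S = {g | matrixOf e g ∈ z3MatSet} := by
  ext g
  rw [Set.mem_ofPred_eq, mem_z3MatSet_iff]
  constructor
  · intro hg
    exact rot_cube_of_mem h hmu hg (fix_of_axis h hl hg (hax g hg))
  · rintro ⟨c, s, hcs, hM⟩
    rw [mem_stab_iff h, hM]
    exact ⟨det_rot hcs.1, rot_intertwines_cube lam mu hcs, z3S_comm_rot a b c s⟩

lemma exists_stab_eq_s3 {K : V₃ →ₗ[ℝ] V₃ →ₗ[ℝ] V₃} {S : V₃ →ₗ[ℝ] V₃}
    {e : OrthonormalBasis (Fin 3) ℝ V₃} {mu a b : ℝ}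
    (h : HasCoord K S e (z3K 0 mu) (z3S a b)) (hmu : mu ≠ 0) :
    ∃ f : OrthonormalBasis (Fin 3) ℝ V₃, stab K S = {g | matrixOf f g ∈ s3MatSet} := by
  have hQ : Qmat.transpose * Qmat = 1 := by
    ext i j
    fin_cases i <;> fin_cases j <;> simp [Qmat, Matrix.mul_apply, Fin.sum_univ_three]
  -- the axis of the order-3 rotation has to become the third basis vector
  obtain ⟨f, hf⟩ := exists_basis e Qmat hQ
  have hQ' : Qmat * Qmat.transpose = 1 := mul_eq_one_comm.mp hQ
  have hrot : ∀ c s : ℝ, (!![c, -s, 0; s, c, 0; 0, 0, 1] : Matrix (Fin 3) (Fin 3) ℝ) =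
      Qmat.transpose * !![1, 0, 0; 0, c, -s; 0, s, c] * Qmat := by
    intro c s
    ext i j
    fin_cases i <;> fin_cases j <;> simp [Qmat, Matrix.mul_apply, Fin.sum_univ_three]
  have hflip : ∀ c s : ℝ, (!![c, s, 0; s, -c, 0; 0, 0, -1] : Matrix (Fin 3) (Fin 3) ℝ) =
      Qmat.transpose * !![-1, 0, 0; 0, c, s; 0, s, -c] * Qmat := by
    intro c s
    ext i j
    fin_cases i <;> fin_cases j <;> simp [Qmat, Matrix.mul_apply, Fin.sum_univ_three]
  have hinj : ∀ M N : Matrix (Fin 3) (Fin 3) ℝ,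
      Qmat.transpose * M * Qmat = Qmat.transpose * N * Qmat ↔ M = N := by
    intro M N
    refine ⟨fun H => ?_, fun H => by rw [H]⟩
    have := congrArg (fun X => Qmat * X * Qmat.transpose) H
    simpa only [← mul_assoc, hQ', one_mul, mul_assoc _ Qmat Qmat.transpose, mul_one] using this
  refine ⟨f, ?_⟩
  ext g
  rw [Set.mem_ofPred_eq, mem_s3MatSet_iff, matrixOf_change hf]
  simp only [hrot, hflip, hinj]
  constructor
  · intro hg
    rcases eq_one_or_neg_one (axis_of_K h (by simpa using hmu) hg) with hx | hx
    · exact Or.inl (rot_cube_of_mem h hmu hg hx)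
    · exact Or.inr (flip_cube_of_mem h hmu hg hx)
  · rintro (⟨c, s, hcs, hM⟩ | ⟨c, s, hcs, hM⟩)
    · rw [mem_stab_iff h, hM]
      exact ⟨det_rot hcs.1, rot_intertwines_cube 0 mu hcs, z3S_comm_rot a b c s⟩
    · rw [mem_stab_iff h, hM]
      exact ⟨det_flip hcs.1, flip_intertwines_cube mu hcs, z3S_comm_flip a b c s⟩

/-! ### The tetrahedral group -/

/-- The coefficients of the cubic form `6 nu x y z`. -/
def otK (nu : ℝ) : Fin 3 → Fin 3 → Fin 3 → ℝ :=
  ![![![0, 0, 0], ![0, 0, nu], ![0, nu, 0]],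
    ![![0, 0, nu], ![0, 0, 0], ![nu, 0, 0]],
    ![![0, nu, 0], ![nu, 0, 0], ![0, 0, 0]]]

/-- For `mu² = 2 lam²` the cubic form is, in a suitable orthonormal basis, a multiple of `x y z`.
The basis vectors are `(e₁ + t R e₂) / √3` with `t = mu / lam` and `R` running through the rotations
by multiples of `2π/3` about `e₁`. -/
lemma exists_ot_coord {K : V₃ →ₗ[ℝ] V₃ →ₗ[ℝ] V₃} {S : V₃ →ₗ[ℝ] V₃}
    {e : OrthonormalBasis (Fin 3) ℝ V₃} {lam mu a : ℝ}
    (h : HasCoord K S e (z3K lam mu) (z3S a a)) (hl : lam ≠ 0) (hlm : mu ^ 2 = 2 * lam ^ 2) :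
    ∃ (f : OrthonormalBasis (Fin 3) ℝ V₃) (nu : ℝ), nu ≠ 0 ∧
      HasCoord K S f (otK nu) (z3S a a) := by
  obtain ⟨t, rfl⟩ : ∃ t, mu = t * lam := ⟨mu / lam, by field_simp⟩
  have ht : t ^ 2 = 2 := by
    have : lam ^ 2 * (t ^ 2 - 2) = 0 := by linarith
    have := (mul_eq_zero.mp this).resolve_left (by positivity)
    linarith
  obtain ⟨w, hw0, hw⟩ : ∃ w : ℝ, 0 < w ∧ w ^ 2 = 3 :=
    ⟨Real.sqrt 3, by positivity, Real.sq_sqrt (by norm_num)⟩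
  set Q : Matrix (Fin 3) (Fin 3) ℝ :=
    !![w / 3, w / 3, w / 3; t * w / 3, -(t * w / 6), -(t * w / 6); 0, t / 2, -(t / 2)] with hQ
  obtain ⟨f, hf⟩ := exists_basis e Q (by
    ext i j
    fin_cases i <;> fin_cases j <;> simp [hQ, Matrix.mul_apply, Fin.sum_univ_three] <;> grind)
  refine ⟨f, lam * w, by positivity, hasCoord_change h hf ?_ (by simp [z3S_scalar])⟩
  intro i j r
  fin_cases i <;> fin_cases j <;> fin_cases r <;>
    simp [hQ, z3K, otK, Fin.sum_univ_three] <;> grind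

/-- The group `⟨P₁, P₂, Q⟩` consists of the signed matrices of the three even permutations of the
basis with an even number of minus signs. -/
lemma mem_a4MatSet_iff (M : Matrix (Fin 3) (Fin 3) ℝ) :
    M ∈ a4MatSet ↔ ∃ p q : ℝ, p ^ 2 = 1 ∧ q ^ 2 = 1 ∧
      (M = !![p, 0, 0; 0, q, 0; 0, 0, p * q] ∨ M = !![0, 0, p; q, 0, 0; 0, p * q, 0] ∨
        M = !![0, p, 0; 0, 0, q; p * q, 0, 0]) := by
  have hQQ : Qmat * Qmat = !![0, 1, 0; 0, 0, 1; 1, 0, 0] := by simp [Qmat]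
  simp only [a4MatSet, Set.mem_insert_iff, Set.mem_singleton_iff, hQQ]
  constructor
  · rintro (rfl | rfl | rfl | rfl | rfl | rfl | rfl | rfl | rfl | rfl | rfl | rfl)
    · exact ⟨1, 1, by simp, by simp, Or.inl (by simp [Matrix.one_fin_three])⟩
    · exact ⟨1, -1, by simp, by simp, Or.inl (by simp [P1mat])⟩
    · exact ⟨-1, 1, by simp, by simp, Or.inl (by simp [P2mat])⟩
    · exact ⟨-1, -1, by simp, by simp, Or.inl (by simp [P3mat])⟩
    · exact ⟨1, 1, by simp, by simp, Or.inr (Or.inl (by simp [Qmat]))⟩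
    · exact ⟨1, 1, by simp, by simp, Or.inr (Or.inr (by simp))⟩
    · exact ⟨1, -1, by simp, by simp, Or.inr (Or.inl (by simp [P1mat, Qmat]))⟩
    · exact ⟨-1, 1, by simp, by simp, Or.inr (Or.inl (by simp [P2mat, Qmat]))⟩
    · exact ⟨-1, -1, by simp, by simp, Or.inr (Or.inl (by simp [P3mat, Qmat]))⟩
    · exact ⟨-1, -1, by simp, by simp, Or.inr (Or.inr (by simp [P1mat]))⟩
    · exact ⟨1, -1, by simp, by simp, Or.inr (Or.inr (by simp [P2mat]))⟩
    · exact ⟨-1, 1, by simp, by simp, Or.inr (Or.inr (by simp [P3mat]))⟩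
  · rintro ⟨p, q, hp, hq, h⟩
    rcases eq_one_or_neg_one hp with rfl | rfl <;> rcases eq_one_or_neg_one hq with rfl | rfl <;>
      rcases h with rfl | rfl | rfl <;>
      simp [P1mat, P2mat, P3mat, Qmat, Matrix.one_fin_three]

/-- The rotations preserving `x y z` are those of the tetrahedron. -/
lemma stab_eq_a4 {K : V₃ →ₗ[ℝ] V₃ →ₗ[ℝ] V₃} {S : V₃ →ₗ[ℝ] V₃}
    {e : OrthonormalBasis (Fin 3) ℝ V₃} {nu a : ℝ}
    (h : HasCoord K S e (otK nu) (z3S a a)) (hnu : nu ≠ 0) :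
    stab K S = {g | matrixOf e g ∈ a4MatSet} := by
  ext g
  rw [Set.mem_ofPred_eq, mem_a4MatSet_iff, mem_stab_iff h]
  constructor
  · rintro ⟨hd, hI, -⟩
    have hO := matrixOf_orth e g
    generalize matrixOf e g = M at *
    -- `K (g e₁) (g e₁) = 0` kills all products of two entries of the first column
    have a0 := hI 0 0 0
    have a1 := hI 0 0 1
    have a2 := hI 0 0 2
    have b0 := hI 1 1 0
    have b1 := hI 1 1 1
    have b2 := hI 1 1 2
    -- `K (g e₁) (g e₂) = nu • g e₃` expresses the third column through the first two
    have c0 := hI 0 1 0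
    have c1 := hI 0 1 1
    have c2 := hI 0 1 2
    simp [Fin.sum_univ_three, otK] at a0 a1 a2 b0 b1 b2 c0 c1 c2
    have n0 := orth_cols hO 0 0
    have n01 := orth_cols hO 0 1
    simp at n0 n01
    rw [Matrix.det_fin_three] at hd
    replace a0 : M 1 0 * M 2 0 = 0 := mul_left_cancel₀ hnu (by linarith)
    replace a1 : M 0 0 * M 2 0 = 0 := mul_left_cancel₀ hnu (by linarith)
    replace a2 : M 0 0 * M 1 0 = 0 := mul_left_cancel₀ hnu (by linarith)
    replace b0 : M 1 1 * M 2 1 = 0 := mul_left_cancel₀ hnu (by linarith)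
    replace b1 : M 0 1 * M 2 1 = 0 := mul_left_cancel₀ hnu (by linarith)
    replace b2 : M 0 1 * M 1 1 = 0 := mul_left_cancel₀ hnu (by linarith)
    replace c0 : M 0 2 = M 1 0 * M 2 1 + M 2 0 * M 1 1 := mul_left_cancel₀ hnu (by linarith)
    replace c1 : M 1 2 = M 0 0 * M 2 1 + M 2 0 * M 0 1 := mul_left_cancel₀ hnu (by linarith)
    replace c2 : M 2 2 = M 0 0 * M 1 1 + M 1 0 * M 0 1 := mul_left_cancel₀ hnu (by linarith)
    -- in each case the determinant condition reduces to `u² - v² = 1` with `u v = 0`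
    have key : ∀ x u v : ℝ, x ^ 2 = 1 → u * v = 0 → x * (u * (x * u) - v * (x * v)) = 1 →
        v = 0 ∧ u ^ 2 = 1 := by
      intro x u v hx huv h1
      have h2 : u ^ 2 - v ^ 2 = 1 := by linear_combination h1 - (u ^ 2 - v ^ 2) * hx
      rcases mul_eq_zero.mp huv with rfl | rfl
      · nlinarith [sq_nonneg v]
      · exact ⟨rfl, by linarith⟩
    by_cases hx : M 0 0 = 0
    · by_cases hy : M 1 0 = 0
      · have hz : M 2 0 ^ 2 = 1 := by simp only [hx, hy] at n0; linarith
        have hz0 : M 2 0 ≠ 0 := by rintro h0; simp [h0] at hz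
        have h21 : M 2 1 = 0 := by simpa [hx, hy, hz0] using n01
        obtain ⟨h11, h01⟩ := key (M 2 0) (M 0 1) (M 1 1) hz b2 (by
          simp only [c0, c1, c2, hx, hy, h21] at hd; linarith)
        refine ⟨M 0 1, M 2 0 * M 0 1, h01, by rw [mul_pow, hz, h01, one_mul], Or.inr (Or.inr ?_)⟩
        ext i j
        fin_cases i <;> fin_cases j <;> simp [hx, hy, h21, h11, c0, c1, c2]
        linear_combination -(M 2 0) * h01
      · have hz : M 2 0 = 0 := (mul_eq_zero.mp a0).resolve_left hy
        have hy2 : M 1 0 ^ 2 = 1 := by simp only [hx, hz] at n0; linarith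
        have h11 : M 1 1 = 0 := by simpa [hx, hz, hy] using n01
        obtain ⟨h01, h21⟩ := key (M 1 0) (M 2 1) (M 0 1) hy2 (by linarith) (by
          simp only [c0, c1, c2, hx, hz, h11] at hd; linarith)
        refine ⟨M 1 0 * M 2 1, M 1 0, by rw [mul_pow, hy2, h21, one_mul], hy2, Or.inr (Or.inl ?_)⟩
        ext i j
        fin_cases i <;> fin_cases j <;> simp [hx, hz, h01, h11, c0, c1, c2]
        linear_combination -(M 2 1) * hy2
    · have hy : M 1 0 = 0 := (mul_eq_zero.mp a2).resolve_left hx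
      have hz : M 2 0 = 0 := (mul_eq_zero.mp a1).resolve_left hx
      have hx2 : M 0 0 ^ 2 = 1 := by simp only [hy, hz] at n0; linarith
      have h01 : M 0 1 = 0 := by simpa [hy, hz, hx] using n01
      obtain ⟨h21, h11⟩ := key (M 0 0) (M 1 1) (M 2 1) hx2 b0 (by
        simp only [c0, c1, c2, hy, hz, h01] at hd; linarith)
      refine ⟨M 0 0, M 1 1, hx2, h11, Or.inl ?_⟩
      ext i j
      fin_cases i <;> fin_cases j <;> simp [hy, hz, h01, h21, c0, c1, c2]
  · rintro ⟨p, q, hp, hq, hM⟩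
    refine ⟨?_, ?_, by simp [z3S_scalar]⟩
    · rcases hM with hM | hM | hM <;> rw [hM] <;> simp [Matrix.det_fin_three] <;> grind
    · intro i j r
      rcases hM with hM | hM | hM <;> rw [hM] <;> fin_cases i <;> fin_cases j <;> fin_cases r <;>
        simp [otK, Fin.sum_univ_three] <;> grind

/-! ### The case distinction -/

/-- The case distinction on the parameters of the normal form with a threefold axis. -/
lemma classify_of_z3_coord {K : V₃ →ₗ[ℝ] V₃ →ₗ[ℝ] V₃} {S : V₃ →ₗ[ℝ] V₃}
    {e : OrthonormalBasis (Fin 3) ℝ V₃} {lam mu a b : ℝ}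
    (h : HasCoord K S e (z3K lam mu) (z3S a b)) :
    ∃ e : OrthonormalBasis (Fin 3) ℝ V₃,
      stab K S = so3Set ∨
      stab K S = rotSet e ∪ flipSet e ∨
      stab K S = rotSet e ∨
      stab K S = {g | matrixOf e g ∈ a4MatSet} ∨
      stab K S = {g | matrixOf e g ∈ s3MatSet} ∨
      stab K S = {g | matrixOf e g ∈ z3MatSet} := by
  rcases eq_or_ne mu 0 with rfl | hmu
  · rcases eq_or_ne lam 0 with rfl | hl
    · rcases eq_or_ne a b with rfl | hab
      · exact ⟨e, Or.inl (stab_eq_so3Set h)⟩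
      · exact ⟨e, Or.inr (Or.inl (stab_eq_rotSet_union h hab))⟩
    · exact ⟨e, Or.inr (Or.inr (Or.inl (stab_eq_rotSet h hl)))⟩
  · rcases eq_or_ne lam 0 with rfl | hl
    · obtain ⟨f, hf⟩ := exists_stab_eq_s3 h hmu
      exact ⟨f, Or.inr (Or.inr (Or.inr (Or.inr (Or.inl hf))))⟩
    · rcases ne_or_eq a b with hab | rfl
      · exact ⟨e, Or.inr (Or.inr (Or.inr (Or.inr (Or.inr
          (stab_eq_z3 h hl hmu fun g hg => axis_of_S h hab hg)))))⟩
      · rcases ne_or_eq (mu ^ 2) (2 * lam ^ 2) with hlm | hlm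
        · exact ⟨e, Or.inr (Or.inr (Or.inr (Or.inr (Or.inr
            (stab_eq_z3 h hl hmu fun g hg => axis_of_K h hlm hg)))))⟩
        · obtain ⟨f, nu, hnu, hf⟩ := exists_ot_coord h hl hlm
          exact ⟨f, Or.inr (Or.inr (Or.inr (Or.inl (stab_eq_a4 hf hnu))))⟩

/-! ### Stabilizers of exponent two -/

/-- A matrix commuting with `P₁` respects the splitting into `e₁` and its orthogonal plane. -/
lemma block_of_comm_P1 {M : Matrix (Fin 3) (Fin 3) ℝ} (h : P1mat * M = M * P1mat) :
    M 0 1 = 0 ∧ M 0 2 = 0 ∧ M 1 0 = 0 ∧ M 2 0 = 0 := by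
  have h1 := congrFun (congrFun h 0) 1
  have h2 := congrFun (congrFun h 0) 2
  have h3 := congrFun (congrFun h 1) 0
  have h4 := congrFun (congrFun h 2) 0
  simp [P1mat, Matrix.mul_apply, Fin.sum_univ_three] at h1 h2 h3 h4
  refine ⟨?_, ?_, ?_, ?_⟩ <;> linarith

lemma comm_P2 {M : Matrix (Fin 3) (Fin 3) ℝ} (h : P2mat * M = M * P2mat) :
    M 1 2 = 0 ∧ M 2 1 = 0 := by
  have h1 := congrFun (congrFun h 1) 2
  have h2 := congrFun (congrFun h 2) 1
  simp [P2mat, Matrix.mul_apply, Fin.sum_univ_three] at h1 h2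
  refine ⟨?_, ?_⟩ <;> linarith

/-- A rotation about `e₁` which squares to the identity is the identity or `P₁`. -/
lemma rot_involution {M : Matrix (Fin 3) (Fin 3) ℝ} (hO : M.transpose * M = 1) (hd : M.det = 1)
    (hx : M 0 0 = 1) (h2 : M * M = 1) : M = 1 ∨ M = P1mat := by
  obtain ⟨c, s, hcs, rfl⟩ := rot_form hO hd hx
  have h3 := congrFun (congrFun h2 1) 1
  simp [Matrix.mul_apply, Fin.sum_univ_three] at h3
  have hs : s = 0 := by nlinarith
  subst hs
  rcases eq_one_or_neg_one (x := c) (by linarith) with rfl | rfl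
  · left; simp [Matrix.one_fin_three]
  · right; simp [P1mat]

lemma mem_kleinMatSet_of_comm {M : Matrix (Fin 3) (Fin 3) ℝ} (hO : M.transpose * M = 1)
    (hd : M.det = 1) (h1 : P1mat * M = M * P1mat) (h2 : P2mat * M = M * P2mat) :
    M ∈ kleinMatSet := by
  obtain ⟨m01, m02, m10, m20⟩ := block_of_comm_P1 h1
  obtain ⟨m12, m21⟩ := comm_P2 h2
  have n0 := orth_cols hO 0 0
  have n1 := orth_cols hO 1 1
  simp [m01, m10, m20, m21] at n0 n1
  rw [Matrix.det_fin_three] at hd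
  simp [m01, m02, m10, m20, m12, m21] at hd
  have hM : M = !![M 0 0, 0, 0; 0, M 1 1, 0; 0, 0, M 2 2] := by
    ext i j
    fin_cases i <;> fin_cases j <;> simp [m01, m02, m10, m20, m12, m21]
  rw [hM]
  rcases eq_one_or_neg_one (x := M 0 0) (by linarith) with hp | hp <;>
    rcases eq_one_or_neg_one (x := M 1 1) (by linarith) with hq | hq <;>
    rw [hp, hq] at hd ⊢
  · have : M 2 2 = 1 := by linarith
    simp [kleinMatSet, this, Matrix.one_fin_three]
  · have : M 2 2 = -1 := by linarith
    simp [kleinMatSet, this, P1mat]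
  · have : M 2 2 = -1 := by linarith
    simp [kleinMatSet, this, P2mat]
  · have : M 2 2 = 1 := by linarith
    simp [kleinMatSet, this, P3mat]

/-- A nontrivial stabilizer all of whose elements square to the identity is commutative, hence has
order at most four. -/
lemma classify_of_involutions {K : V₃ →ₗ[ℝ] V₃ →ₗ[ℝ] V₃} {S : V₃ →ₗ[ℝ] V₃}
    (hinv : ∀ g ∈ stab K S, g * g = 1) (hnt : ∃ g ∈ stab K S, g ≠ 1) :
    ∃ e : OrthonormalBasis (Fin 3) ℝ V₃,
      stab K S = {g | matrixOf e g ∈ kleinMatSet} ∨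
      stab K S = {g | matrixOf e g ∈ z2MatSet} := by
  have hcomm : ∀ g ∈ stab K S, ∀ h ∈ stab K S, g * h = h * g := by
    intro g hg h hh
    have h1 := hinv _ (stab_mul hg hh)
    have hg' := hinv g hg
    have hh' := hinv h hh
    calc g * h = g * (g * h * (g * h)) * h := by rw [h1, mul_one]
      _ = (g * g) * (h * g) * (h * h) := by simp only [mul_assoc]
      _ = h * g := by rw [hg', hh', one_mul, mul_one]
  have hcommM : ∀ e : OrthonormalBasis (Fin 3) ℝ V₃, ∀ g ∈ stab K S, ∀ h ∈ stab K S,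
      matrixOf e g * matrixOf e h = matrixOf e h * matrixOf e g := by
    intro e g hg h hh
    rw [← matrixOf_mul, ← matrixOf_mul, hcomm g hg h hh]
  have hinvM : ∀ e : OrthonormalBasis (Fin 3) ℝ V₃, ∀ g ∈ stab K S,
      matrixOf e g * matrixOf e g = 1 := by
    intro e g hg
    rw [← matrixOf_mul, hinv g hg, matrixOf_one]
  have hdetM : ∀ e : OrthonormalBasis (Fin 3) ℝ V₃, ∀ g ∈ stab K S, (matrixOf e g).det = 1 := by
    intro e g hg
    rw [det_matrixOf, hg.1]
  have hrot : ∀ e : OrthonormalBasis (Fin 3) ℝ V₃, ∀ g ∈ stab K S, matrixOf e g 0 0 = 1 →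
      matrixOf e g = 1 ∨ matrixOf e g = P1mat := fun e g hg hx =>
    rot_involution (matrixOf_orth e g) (hdetM e g hg) hx (hinvM e g hg)
  obtain ⟨P, hP, hP1⟩ := hnt
  obtain ⟨e, he⟩ := exists_axis P hP.1
  have hPe : matrixOf e P = P1mat := by
    refine (hrot e P hP ?_).resolve_left fun h1 => hP1 ?_
    · simp [matrixOf, he]
    · exact matrixOf_injective e (h1.trans (matrixOf_one e).symm)
  by_cases hall : ∀ g ∈ stab K S, matrixOf e g ∈ z2MatSet
  · refine ⟨e, Or.inr (Set.Subset.antisymm hall ?_)⟩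
    rintro g (hg | hg)
    · rw [matrixOf_injective e (hg.trans (matrixOf_one e).symm)]
      exact stab_one K S
    · rw [matrixOf_injective e (hg.trans hPe.symm)]
      exact hP
  · push Not at hall
    obtain ⟨h, hh, hz⟩ := hall
    have hb := block_of_comm_P1 (hPe ▸ hcommM e P hP h hh)
    have n0 := orth_cols (matrixOf_orth e h) 0 0
    simp [hb.2.2.1, hb.2.2.2] at n0
    have hx : matrixOf e h 0 0 = -1 :=
      (eq_one_or_neg_one (x := matrixOf e h 0 0) (by linarith)).resolve_left
        fun hx => hz (hrot e h hh hx)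
    obtain ⟨c, s, hcs, hM⟩ := flip_form (matrixOf_orth e h) (hdetM e h hh) hx
    -- the axis of `h` is `cos (θ/2) e₂ + sin (θ/2) e₃`; it becomes the second basis vector
    obtain ⟨C, D, hCD, hC, hD⟩ : ∃ C D : ℝ, C ^ 2 + D ^ 2 = 1 ∧ c = C ^ 2 - D ^ 2 ∧
        s = 2 * C * D := by
      obtain ⟨θ, rfl, rfl⟩ := exists_angle hcs
      refine ⟨Real.cos (θ / 2), Real.sin (θ / 2), Real.cos_sq_add_sin_sq _, ?_, ?_⟩
      · rw [← Real.cos_two_mul', mul_div_cancel₀ θ two_ne_zero]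
      · rw [mul_right_comm, ← Real.sin_two_mul, mul_div_cancel₀ θ two_ne_zero]
    set Q : Matrix (Fin 3) (Fin 3) ℝ := !![1, 0, 0; 0, C, -D; 0, D, C] with hQ
    obtain ⟨f, hf⟩ := exists_basis e Q (by
      ext i j
      fin_cases i <;> fin_cases j <;> simp [hQ, Matrix.mul_apply, Fin.sum_univ_three] <;> grind)
    have hPf : matrixOf f P = P1mat := by
      rw [matrixOf_change hf, hPe]
      ext i j
      fin_cases i <;> fin_cases j <;>
        simp [hQ, P1mat, Matrix.mul_apply, Fin.sum_univ_three] <;> grind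
    have hhf : matrixOf f h = P2mat := by
      rw [matrixOf_change hf, hM]
      ext i j
      fin_cases i <;> fin_cases j <;>
        simp [hQ, P2mat, Matrix.mul_apply, Fin.sum_univ_three] <;> grind
    refine ⟨f, Or.inl (Set.Subset.antisymm (fun g hg => ?_) ?_)⟩
    · exact mem_kleinMatSet_of_comm (matrixOf_orth f g) (hdetM f g hg)
        (hPf ▸ hcommM f P hP g hg) (hhf ▸ hcommM f h hh g hg)
    · have hPh : matrixOf f (P * h) = P3mat := by
        rw [matrixOf_mul, hPf, hhf]
        simp [P1mat, P2mat, P3mat]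
      rintro g (hg | hg | hg | hg)
      · rw [matrixOf_injective f (hg.trans (matrixOf_one f).symm)]
        exact stab_one K S
      · rw [matrixOf_injective f (hg.trans hPf.symm)]
        exact hP
      · rw [matrixOf_injective f (hg.trans hhf.symm)]
        exact hh
      · rw [matrixOf_injective f (hg.trans hPh.symm)]
        exact stab_mul hP hh

/-- Theorem 2.2, group part: if the stabilizer of `(K,S)` in `SO(3)` is
nontrivial, then with respect to a suitable orthonormal basis it is one of: `SO(3)`;
`Z₂ × SO(2)` (rotations about `e₁` and rotations by `π` about axes orthogonal to `e₁`);
`SO(2)` (rotations about `e₁`); `⟨P₁,P₂,Q⟩ ≅ A₄`; `⟨P₁,R₃⟩ ≅ S₃`; `{id,P₁,P₂,P₃} ≅ Z₂×Z₂`;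
`{id,R₁,R₁²} ≅ Z₃`; or `{id,P₁} ≅ Z₂`. -/
theorem statement_5 (K : V₃ →ₗ[ℝ] V₃ →ₗ[ℝ] V₃) (S : V₃ →ₗ[ℝ] V₃)
    (hK : IsAdmissibleK K) (hS : IsSymmEndo S)
    (hnt : ∃ g ∈ stab K S, g ≠ 1) :
    ∃ e : OrthonormalBasis (Fin 3) ℝ V₃,
      stab K S = so3Set ∨
      stab K S = rotSet e ∪ flipSet e ∨
      stab K S = rotSet e ∨
      stab K S = {g | matrixOf e g ∈ a4MatSet} ∨
      stab K S = {g | matrixOf e g ∈ s3MatSet} ∨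
      stab K S = {g | matrixOf e g ∈ kleinMatSet} ∨
      stab K S = {g | matrixOf e g ∈ z3MatSet} ∨
      stab K S = {g | matrixOf e g ∈ z2MatSet} := by
  by_cases hinv : ∀ g ∈ stab K S, g * g = 1
  · obtain ⟨e, h | h⟩ := classify_of_involutions hinv hnt
    · exact ⟨e, by tauto⟩
    · exact ⟨e, by tauto⟩
  · push Not at hinv
    obtain ⟨g, hg, hg2⟩ := hinv
    obtain ⟨e, lam, mu, a, b, h⟩ := exists_z3_coord hK hS hg hg2
    obtain ⟨f, hf⟩ := classify_of_z3_coord h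
    exact ⟨f, by tauto⟩
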